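/- arXiv:1804.10799 — 4 statements merged into one kernel-verified Lean document; each statement's English description precedes it below -/
import Mathlib

section
/- Let 𝒢 = (V,E) be a simple directed graph, let i ∈ V, and let C ⊆ V. Then (i, N_i) is identifiable from C if and only if for every admissible network matrix G over ℝ(z), the submatrix T_{C, N_i} of T := (I − G)⁻¹ (rows indexed by C, columns indexed by N_i) has rank |N_i| over the field ℝ(z). -/
open Polynomial Matrix

noncomputable section

/-- A rational function `f ∈ ℝ(z)` is *proper* if the degree of its numerator is at most
the degree of its denominator. -/
def Proper (f : RatFunc ℝ) : Prop := f.num.degree ≤ f.denom.degree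

/-- A rational function `f ∈ ℝ(z)` is *strictly proper* if the degree of its numerator is
strictly less than the degree of its denominator. -/
def StrictlyProper (f : RatFunc ℝ) : Prop := f.num.degree < f.denom.degree

/-- The (finite) limit at infinity of a proper rational function: the ratio of leading
coefficients when the degrees of numerator and denominator coincide, and `0` otherwise. -/
def limAtInfty (f : RatFunc ℝ) : ℝ :=
  if f.num.degree = f.denom.degree then f.num.leadingCoeff / f.denom.leadingCoeff else 0

/-- The set `N_i` of out-neighbours of node `i` in the directed graph with edge set `E`. -/
def Nout {n : ℕ} (E : Finset (Fin n × Fin n)) (i : Fin n) : Finset (Fin n) :=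
  Finset.univ.filter fun j => (i, j) ∈ E

/-- The real matrix `lim_{z→∞} (I - G(z))`, taken entrywise. -/
def limMatrix {n : ℕ} (G : Matrix (Fin n) (Fin n) (RatFunc ℝ)) : Matrix (Fin n) (Fin n) ℝ :=
  Matrix.of fun a b => limAtInfty ((1 - G) a b)

/-- A network matrix `G` over `ℝ(z)` is *admissible* for the graph with edge set `E` if
(P1) every entry is proper, (P2) `G j i ≠ 0` iff `(i,j) ∈ E`, and
(P3) every principal minor of `lim_{z→∞}(I - G(z))` is nonzero. -/
def Admissible {n : ℕ} (E : Finset (Fin n × Fin n))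
    (G : Matrix (Fin n) (Fin n) (RatFunc ℝ)) : Prop :=
  (∀ i j : Fin n, Proper (G j i)) ∧
  (∀ i j : Fin n, G j i ≠ 0 ↔ (i, j) ∈ E) ∧
  (∀ S : Finset (Fin n),
    ((limMatrix G).submatrix (fun x : {v // v ∈ S} => (x : Fin n))
      (fun x : {v // v ∈ S} => (x : Fin n))).det ≠ 0)

/-- The rows of `A` and `B` indexed by the subset `C` agree, i.e. `C·A = C·B` where `C`
also denotes the selection matrix of `C`. -/
def rowsAgree {n : ℕ} (C : Finset (Fin n)) (A B : Matrix (Fin n) (Fin n) (RatFunc ℝ)) : Prop :=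
  A.submatrix (fun c : {v // v ∈ C} => (c : Fin n)) id
    = B.submatrix (fun c : {v // v ∈ C} => (c : Fin n)) id

/-- `(i, N_i)` is identifiable from the measured node set `C`. -/
def IdentifiableNode {n : ℕ} (E : Finset (Fin n × Fin n)) (i : Fin n)
    (C : Finset (Fin n)) : Prop :=
  ∀ G Gbar : Matrix (Fin n) (Fin n) (RatFunc ℝ),
    Admissible E G → Admissible E Gbar →
    rowsAgree C (1 - G)⁻¹ (1 - Gbar)⁻¹ → ∀ j : Fin n, G j i = Gbar j i

/-- The graph is identifiable from the measured node set `C`. -/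
def IdentifiableGraph {n : ℕ} (E : Finset (Fin n × Fin n)) (C : Finset (Fin n)) : Prop :=
  ∀ G Gbar : Matrix (Fin n) (Fin n) (RatFunc ℝ),
    Admissible E G → Admissible E Gbar →
    rowsAgree C (1 - G)⁻¹ (1 - Gbar)⁻¹ → G = Gbar

/-- The valuation at infinity. -/
abbrev vinf : Valuation (RatFunc ℝ) (WithZero (Multiplicative ℤ)) := by
  classical exact RatFunc.inftyValuation ℝ

lemma vinf_of_ne {f : RatFunc ℝ} (hf : f ≠ 0) : vinf f = WithZero.exp f.intDegree := by
  classical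
  exact RatFunc.inftyValuation_of_nonzero ℝ hf

lemma vinf_C {c : ℝ} (hc : c ≠ 0) : vinf (RatFunc.C c) = 1 := by
  classical
  exact RatFunc.inftyValuation.C ℝ hc

lemma vinf_C_le (c : ℝ) : vinf (RatFunc.C c) ≤ 1 := by
  by_cases hc : c = 0
  · simp [hc]
  · exact (vinf_C hc).le

lemma exp_le_one_iff' (a : ℤ) : WithZero.exp a ≤ (1 : WithZero (Multiplicative ℤ)) ↔ a ≤ 0 := by
  rw [← WithZero.exp_zero, WithZero.exp_le_exp]

lemma exp_lt_one_iff' (a : ℤ) : WithZero.exp a < (1 : WithZero (Multiplicative ℤ)) ↔ a < 0 := by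
  rw [← WithZero.exp_zero, WithZero.exp_lt_exp]

lemma proper_iff (f : RatFunc ℝ) : Proper f ↔ vinf f ≤ 1 := by
  by_cases hf : f = 0
  · subst hf
    simp [Proper]
  · rw [vinf_of_ne hf, exp_le_one_iff', RatFunc.intDegree, Proper,
      Polynomial.degree_eq_natDegree (RatFunc.num_ne_zero hf),
      Polynomial.degree_eq_natDegree f.denom_ne_zero]
    rw [Nat.cast_le]
    omega

/-- A quotient of polynomials with strict degree inequality has valuation less than one. -/
lemma vinf_div_lt (p q : ℝ[X]) (hq : q ≠ 0) (h : p.degree < q.degree) :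
    vinf (algebraMap ℝ[X] (RatFunc ℝ) p / algebraMap ℝ[X] (RatFunc ℝ) q) < 1 := by
  by_cases hp : p = 0
  · simp [hp]
  · have hp' : algebraMap ℝ[X] (RatFunc ℝ) p ≠ 0 := by simpa using hp
    have hq' : algebraMap ℝ[X] (RatFunc ℝ) q ≠ 0 := by simpa using hq
    rw [vinf_of_ne (div_ne_zero hp' hq'), exp_lt_one_iff', RatFunc.intDegree_div hp' hq',
      RatFunc.intDegree_polynomial, RatFunc.intDegree_polynomial]
    have := Polynomial.natDegree_lt_natDegree hp h
    omega

lemma lim_spec {f : RatFunc ℝ} (hf : vinf f ≤ 1) :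
    vinf (f - RatFunc.C (limAtInfty f)) < 1 := by
  have hP : Proper f := (proper_iff f).2 hf
  have hd : f.denom ≠ 0 := f.denom_ne_zero
  have hd' : algebraMap ℝ[X] (RatFunc ℝ) f.denom ≠ 0 := by simpa using hd
  by_cases h : f.num.degree = f.denom.degree
  · set c := limAtInfty f with hc
    have hc' : c = f.num.leadingCoeff / f.denom.leadingCoeff := by rw [hc, limAtInfty, if_pos h]
    have hn : f.num ≠ 0 := by
      intro h0
      rw [h0, Polynomial.degree_zero] at h
      exact hd (Polynomial.degree_eq_bot.1 h.symm)
    have hlc : f.denom.leadingCoeff ≠ 0 := by simpa using hd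
    have hnl : f.num.leadingCoeff ≠ 0 := by simpa using hn
    have hc0 : c ≠ 0 := by rw [hc']; exact div_ne_zero hnl hlc
    have e : f - RatFunc.C c = algebraMap ℝ[X] (RatFunc ℝ) (f.num - Polynomial.C c * f.denom) /
        algebraMap ℝ[X] (RatFunc ℝ) f.denom := by
      rw [map_sub, map_mul, RatFunc.algebraMap_C, sub_div, RatFunc.num_div_denom,
        mul_div_assoc, div_self hd', mul_one]
    rw [e]
    apply vinf_div_lt _ _ hd
    rw [← h]
    apply Polynomial.degree_sub_lt_left
    · rw [Polynomial.degree_C_mul hc0, h]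
    · exact hn
    · rw [Polynomial.leadingCoeff_mul, Polynomial.leadingCoeff_C, hc', div_mul_cancel₀ _ hlc]
  · have hc : limAtInfty f = 0 := by rw [limAtInfty, if_neg h]
    rw [hc, map_zero, sub_zero, ← RatFunc.num_div_denom f]
    exact vinf_div_lt _ _ hd (lt_of_le_of_ne hP h)

lemma lim_unique {f : RatFunc ℝ} {c : ℝ} (h : vinf (f - RatFunc.C c) < 1) :
    limAtInfty f = c := by
  have hf : vinf f ≤ 1 := by
    have := vinf.map_add_le h.le (vinf_C_le c)
    simpa using this
  by_contra hne
  have h2 := vinf.map_sub_lt h (lim_spec hf)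
  have e : f - RatFunc.C c - (f - RatFunc.C (limAtInfty f)) = RatFunc.C (limAtInfty f - c) := by
    rw [map_sub]; ring
  rw [e, vinf_C (sub_ne_zero.2 hne)] at h2
  exact lt_irrefl _ h2

lemma lim_add_small {f s : RatFunc ℝ} (hf : vinf f ≤ 1) (hs : vinf s < 1) :
    limAtInfty (f + s) = limAtInfty f := by
  apply lim_unique
  have := vinf.map_add_lt (lim_spec hf) hs
  convert this using 2
  ring

/-- The limit at infinity as a ring homomorphism. -/
def limHom : vinf.integer →+* ℝ where
  toFun f := limAtInfty f.1
  map_one' := lim_unique (by simp)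
  map_zero' := lim_unique (by simp)
  map_add' f g := by
    apply lim_unique
    have := vinf.map_add_lt (lim_spec f.2) (lim_spec g.2)
    convert this using 2
    rw [map_add]
    push_cast
    ring
  map_mul' f g := by
    apply lim_unique
    have h1 : vinf ((f.1 - RatFunc.C (limAtInfty f.1)) * g.1) < 1 := by
      rw [map_mul]
      exact mul_lt_one_of_lt_of_le (lim_spec f.2) g.2
    have h2 : vinf (RatFunc.C (limAtInfty f.1) * (g.1 - RatFunc.C (limAtInfty g.1))) < 1 := by
      rw [map_mul, mul_comm]
      exact mul_lt_one_of_lt_of_le (lim_spec g.2) (vinf_C_le _)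
    have := vinf.map_add_lt h1 h2
    convert this using 2
    rw [map_mul]
    push_cast
    ring

lemma entry_le {n : ℕ} {E : Finset (Fin n × Fin n)} {G : Matrix (Fin n) (Fin n) (RatFunc ℝ)}
    (hG : Admissible E G) (a b : Fin n) : vinf ((1 - G) a b) ≤ 1 := by
  rw [Matrix.sub_apply]
  apply vinf.map_sub_le
  · rw [Matrix.one_apply]
    split_ifs <;> simp
  · exact (proper_iff _).1 (hG.1 b a)

lemma det_ne {n : ℕ} {E : Finset (Fin n × Fin n)} {G : Matrix (Fin n) (Fin n) (RatFunc ℝ)}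
    (hG : Admissible E G) : (1 - G).det ≠ 0 := by
  intro h0
  have hS := hG.2.2 Finset.univ
  let e : {v : Fin n // v ∈ (Finset.univ : Finset (Fin n))} ≃ Fin n :=
    Equiv.subtypeUnivEquiv (fun x => Finset.mem_univ x)
  have h1 : (limMatrix G).det ≠ 0 := by
    rw [← Matrix.det_submatrix_equiv_self e]
    exact hS
  let A : Matrix (Fin n) (Fin n) vinf.integer := Matrix.of fun a b => ⟨(1 - G) a b, entry_le hG a b⟩
  have hA : vinf.integer.subtype.mapMatrix A = 1 - G := by
    ext a b
    rfl
  have hL : limHom.mapMatrix A = limMatrix G := by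
    ext a b
    rfl
  have hdA : A.det = 0 := by
    have := RingHom.map_det vinf.integer.subtype A
    rw [hA, h0] at this
    exact Subtype.ext this
  apply h1
  rw [← hL, ← RingHom.map_det, hdA, map_zero]

/-- Small nonzero scalings exist. -/
lemma exists_small {n : ℕ} (x d : Fin n → RatFunc ℝ) (hd : ∀ j, d j ≠ 0) :
    ∃ ε : RatFunc ℝ, ε ≠ 0 ∧ ∀ j, vinf (ε * x j) < vinf (d j) := by
  have key : ∀ j, ∀ᶠ k : ℕ in Filter.atTop,
      vinf (RatFunc.X ^ (-(k : ℤ)) * x j) < vinf (d j) := by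
    intro j
    by_cases hx : x j = 0
    · filter_upwards with k
      rw [hx, mul_zero, map_zero, vinf_of_ne (hd j)]
      exact WithZero.exp_pos
    · filter_upwards [Filter.eventually_gt_atTop ((x j).intDegree - (d j).intDegree).toNat] with k hk
      have hX : vinf ((RatFunc.X : RatFunc ℝ) ^ (-(k : ℤ))) = WithZero.exp (-(k : ℤ)) := by
        classical
        exact RatFunc.inftyValuation.X_zpow ℝ _
      rw [map_mul, hX, vinf_of_ne hx, vinf_of_ne (hd j), ← WithZero.exp_add, WithZero.exp_lt_exp]
      omega
  obtain ⟨k, hk⟩ := (Filter.eventually_all.2 key).exists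
  exact ⟨_, zpow_ne_zero _ RatFunc.X_ne_zero, hk⟩

lemma rank_iff {m k : Type*} [Fintype m] [Fintype k] {K : Type*} [Field K] (M : Matrix m k K) :
    M.rank = Fintype.card k ↔ ∀ x, M *ᵥ x = 0 → x = 0 := by
  rw [Matrix.rank_eq_finrank_span_cols, eq_comm]
  have := linearIndependent_iff_card_eq_finrank_span (R := K) (b := M.col)
  rw [Set.finrank] at this
  rw [← this, ← Matrix.mulVec_injective_iff]
  exact injective_iff_map_eq_zero M.mulVecLin

/-- Full-column-rank condition in terms of vectors supported on `N_i`. -/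
lemma rank_sub_iff {n : ℕ} (T : Matrix (Fin n) (Fin n) (RatFunc ℝ)) (C N : Finset (Fin n)) :
    (T.submatrix (fun c : {v // v ∈ C} => (c : Fin n))
      (fun j : {v // v ∈ N} => (j : Fin n))).rank = N.card ↔
    ∀ x : Fin n → RatFunc ℝ, (∀ j, j ∉ N → x j = 0) → (∀ c ∈ C, (T *ᵥ x) c = 0) → x = 0 := by
  have hs : ∀ (x : Fin n → RatFunc ℝ) (c : Fin n), (∀ j, j ∉ N → x j = 0) →
      ∑ j : {v // v ∈ N}, T c j * x j = (T *ᵥ x) c := by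
    intro x c hx
    rw [Finset.sum_coe_sort N (fun j => T c j * x j), Matrix.mulVec, dotProduct]
    apply Finset.sum_subset (Finset.subset_univ _)
    intro j _ hj
    rw [hx j hj, mul_zero]
  have hc : N.card = Fintype.card {v // v ∈ N} := (Fintype.card_coe N).symm
  rw [hc, rank_iff]
  constructor
  · intro h x hx hT
    have := h (fun j => x j) (by
      funext c
      exact (hs x c hx).trans (hT c c.2))
    funext j
    by_cases hj : j ∈ N
    · exact congrFun this ⟨j, hj⟩
    · exact hx j hj
  · intro h y hy
    let x : Fin n → RatFunc ℝ := fun j => if hj : j ∈ N then y ⟨j, hj⟩ else 0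
    have hxy : ∀ j : {v // v ∈ N}, x j = y j := fun j => by simp [x]
    have hx : ∀ j, j ∉ N → x j = 0 := fun j hj => by simp [x, hj]
    have := h x hx (by
      intro c hcC
      rw [← hs x c hx]
      simp_rw [hxy]
      exact congrFun hy ⟨c, hcC⟩)
    funext j
    rw [← hxy, this]
    rfl

/-- `(i, N_i)` is identifiable from `C` if and only if for every admissible
network matrix `G`, the submatrix `T_{C, N_i}` of `T = (I - G)⁻¹` has rank `|N_i|` over `ℝ(z)`. -/
theorem node_identifiability_iff_rank (n : ℕ) (E : Finset (Fin n × Fin n))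
    (hsimple : ∀ v : Fin n, (v, v) ∉ E) (i : Fin n) (C : Finset (Fin n)) :
    IdentifiableNode E i C ↔
      ∀ G : Matrix (Fin n) (Fin n) (RatFunc ℝ), Admissible E G →
        (((1 - G)⁻¹).submatrix (fun c : {v // v ∈ C} => (c : Fin n))
          (fun j : {v // v ∈ Nout E i} => (j : Fin n))).rank = (Nout E i).card := by
  classical
  have hN : ∀ j, j ∈ Nout E i ↔ (i, j) ∈ E := fun j => by simp [Nout]
  simp_rw [rank_sub_iff]
  constructor
  · intro hid G hG x hx hT
    by_contra hx0
    let d : Fin n → RatFunc ℝ := fun j => if G j i = 0 then 1 else G j i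
    have hd : ∀ j, d j ≠ 0 := fun j => by
      by_cases h : G j i = 0 <;> simp [d, h]
    have hd1 : ∀ j, vinf (d j) ≤ 1 := fun j => by
      by_cases h : G j i = 0
      · simp [d, h]
      · simpa [d, h] using (proper_iff _).1 (hG.1 i j)
    obtain ⟨ε, hε, hsm⟩ := exists_small x d hd
    let P : Matrix (Fin n) (Fin n) (RatFunc ℝ) :=
      Matrix.of fun a b => if b = i then ε * x a else 0
    have hP1 : ∀ a b, vinf (P a b) < 1 := by
      intro a b
      by_cases hb : b = i
      · simpa [P, hb] using (hsm a).trans_le (hd1 a)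
      · simp [P, hb]
    have hG' : Admissible E (G + P) := by
      refine ⟨fun a b => ?_, fun a b => ?_, fun S => ?_⟩
      · rw [proper_iff, Matrix.add_apply]
        exact vinf.map_add_le ((proper_iff _).1 (hG.1 a b)) (hP1 _ _).le
      · rw [← hG.2.1 a b, Matrix.add_apply]
        by_cases ha : a = i
        · subst ha
          by_cases hg : G b a = 0
          · have : x b = 0 := hx b (by rw [hN, ← hG.2.1]; simpa using hg)
            simp [P, this, hg]
          · simp only [ne_eq, hg, not_false_eq_true, iff_true]
            intro h0
            have h1 := hsm b
            have h2 : ε * x b = - G b a := by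
              have h3 : G b a + ε * x b = 0 := by simpa [P] using h0
              linear_combination h3
            rw [h2, Valuation.map_neg] at h1
            simp [d, hg] at h1
        · simp [P, ha]
      · have : limMatrix (G + P) = limMatrix G := by
          ext a b
          have e : (1 - (G + P)) a b = (1 - G) a b + - P a b := by
            simp only [Matrix.sub_apply, Matrix.add_apply]; ring
          simp only [limMatrix, Matrix.of_apply]
          rw [e]
          exact lim_add_small (entry_le hG a b) (by rw [Valuation.map_neg]; exact hP1 a b)
        rw [this]
        exact hG.2.2 S
    have hu : IsUnit (1 - G).det := isUnit_iff_ne_zero.2 (det_ne hG)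
    have hu' : IsUnit (1 - (G + P)).det := isUnit_iff_ne_zero.2 (det_ne hG')
    have hTP : ∀ c ∈ C, ∀ b, ((1 - G)⁻¹ * P) c b = 0 := by
      intro c hc b
      by_cases hb : b = i
      · have := hT c hc
        rw [Matrix.mulVec, dotProduct] at this
        simp only [Matrix.mul_apply, P, Matrix.of_apply, hb, if_true]
        calc _ = ε * ∑ j, (1 - G)⁻¹ c j * x j := by
              rw [Finset.mul_sum]; exact Finset.sum_congr rfl fun _ _ => by ring
          _ = 0 := by rw [this, mul_zero]
      · simp [Matrix.mul_apply, P, hb]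
    have hrow : rowsAgree C (1 - G)⁻¹ (1 - (G + P))⁻¹ := by
      have e : (1 - G)⁻¹ = (1 - (G + P))⁻¹ - ((1 - G)⁻¹ * P) * (1 - (G + P))⁻¹ := by
        have h1 : (1 - G)⁻¹ * (1 - (G + P)) = 1 - (1 - G)⁻¹ * P := by
          rw [← sub_sub, Matrix.mul_sub, Matrix.nonsing_inv_mul _ hu]
        calc (1 - G)⁻¹ = (1 - G)⁻¹ * (1 - (G + P)) * (1 - (G + P))⁻¹ := by
              rw [Matrix.mul_assoc, Matrix.mul_nonsing_inv _ hu', Matrix.mul_one]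
          _ = _ := by rw [h1, Matrix.sub_mul, Matrix.one_mul]
      ext c b
      have := congrFun (congrFun e c) b
      rw [Matrix.sub_apply, Matrix.mul_apply (M := (1 - G)⁻¹ * P)] at this
      simp only [hTP c c.2, zero_mul, Finset.sum_const_zero, sub_zero] at this
      exact this
    apply hx0
    funext j
    have := hid G (G + P) hG hG' hrow j
    have h3 : ε * x j = 0 := by simpa [P] using this
    simpa [hε] using h3
  · intro h G G' hG hG' hrow j
    have hu : IsUnit (1 - G).det := isUnit_iff_ne_zero.2 (det_ne hG)
    have hu' : IsUnit (1 - G').det := isUnit_iff_ne_zero.2 (det_ne hG')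
    have key := h G hG (fun j => G j i - G' j i) (by
      intro j hj
      rw [hN] at hj
      have h1 : G j i = 0 := by by_contra h0; exact hj ((hG.2.1 i j).1 h0)
      have h2 : G' j i = 0 := by by_contra h0; exact hj ((hG'.2.1 i j).1 h0)
      simp [h1, h2]) (by
      intro c hc
      have e1 : (1 - G)⁻¹ * (1 - G) = 1 := Matrix.nonsing_inv_mul _ hu
      have e2 : (1 - G')⁻¹ * (1 - G') = 1 := Matrix.nonsing_inv_mul _ hu'
      have e3 : ((1 - G)⁻¹ * (1 - G')) c i = ((1 - G')⁻¹ * (1 - G')) c i := by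
        simp only [Matrix.mul_apply]
        refine Finset.sum_congr rfl fun k _ => ?_
        have : (1 - G)⁻¹ c k = (1 - G')⁻¹ c k := congrFun (congrFun hrow ⟨c, hc⟩) k
        rw [this]
      have e4 : ((1 - G)⁻¹ * (G - G')) c i = 0 := by
        have : G - G' = (1 - G') - (1 - G) := by abel
        rw [this, Matrix.mul_sub, Matrix.sub_apply, e3, e1, e2, sub_self]
      exact e4)
    exact sub_eq_zero.1 (congrFun key j)
end
end

section
/- (Jacobi's identity for minors of the adjugate.) Let K be a field, let A be an invertible n×n matrix over K, and let M, N ⊆ {1,…,n} be index subsets with |M| = |N| = k ≥ 1. Then det((adj A)_{M,N}) = (−1)^{s} · (det A)^{k−1} · det(A_{N^c, M^c}), where s = Σ_{i∈M} i + Σ_{j∈N} j, adj A denotes the adjugate of A, A_{M,N} denotes the submatrix of A with rows indexed by M and columns indexed by N, and S^c := {1,…,n} \ S. -/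
open Matrix Finset

noncomputable section


theorem shuffle_count {k l : ℕ} (M : Finset (Fin (k + l))) (hM : M.card = k)
    (hM' : Mᶜ.card = l) (i : Fin k) :
    (i : ℕ) + (Finset.univ.filter
      (fun j : Fin l => Mᶜ.orderEmbOfFin hM' j < M.orderEmbOfFin hM i)).card
      = (M.orderEmbOfFin hM i : ℕ) := by
  have h1 : (Finset.univ.filter (fun x : Fin (k + l) => x < M.orderEmbOfFin hM i)).card
      = (M.orderEmbOfFin hM i : ℕ) := by
    rw [Finset.filter_gt_eq_Iio, Fin.card_Iio]
  have h2 : (Finset.univ.filter (fun x : Fin k => x < i)).card = (i : ℕ) := by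
    rw [Finset.filter_gt_eq_Iio, Fin.card_Iio]
  conv_rhs => rw [← h1]
  conv_lhs => rw [← h2]
  simp only [Finset.card_filter]
  rw [← Equiv.sum_comp (finSumEquivOfFinset hM hM'), Fintype.sum_sum_type]
  simp only [finSumEquivOfFinset_inl, finSumEquivOfFinset_inr, OrderEmbedding.lt_iff_lt]
  congr!

theorem shuffle_sign {k l : ℕ} (M : Finset (Fin (k + l))) (hM : M.card = k)
    (hM' : Mᶜ.card = l) :
    Equiv.Perm.sign (finSumFinEquiv.symm.trans (finSumEquivOfFinset hM hM'))
      * (-1) ^ (∑ i : Fin k, (i : ℕ)) = (-1) ^ (∑ i ∈ M, (i : ℕ)) := by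
  have hS : ∑ i ∈ M, (i : ℕ) = ∑ i : Fin k, (M.orderEmbOfFin hM i : ℕ) := by
    conv_lhs => rw [← Finset.map_orderEmbOfFin_univ M hM]
    rw [Finset.sum_map]; rfl
  rw [hS, Equiv.Perm.sign_eq_prod_prod_Ioi, ← Finset.prod_pow_eq_pow_sum,
    ← Finset.prod_pow_eq_pow_sum, Fin.prod_univ_add]
  have hIoi : ∀ (i : Fin (k + l)) (f : Fin (k + l) → ℤˣ),
      ∏ j ∈ Finset.Ioi i, f j = ∏ j, if i < j then f j else 1 := by
    intro i f
    rw [← Finset.prod_filter]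
    congr 1
    ext; simp
  simp only [hIoi, Fin.prod_univ_add]
  have hlt : ∀ (a : Fin k) (b : Fin l), Fin.castAdd l a < Fin.natAdd k b := by
    intro a b; simp only [Fin.lt_def, Fin.val_castAdd, Fin.val_natAdd]; omega
  have hnlt : ∀ (a : Fin k) (b : Fin l), ¬ (Fin.natAdd k b < Fin.castAdd l a) := by
    intro a b; exact (hlt a b).le.not_gt
  have hc : ∀ (a b : Fin k), Fin.castAdd l a < Fin.castAdd l b ↔ a < b := fun _ _ => Iff.rfl
  simp only [hlt, hnlt, hc, Fin.natAdd_lt_natAdd_iff, Equiv.trans_apply,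
    finSumFinEquiv_symm_apply_castAdd, finSumFinEquiv_symm_apply_natAdd,
    finSumEquivOfFinset_inl, finSumEquivOfFinset_inr, if_true, if_false,
    OrderEmbedding.lt_iff_lt]
  have hone : ∀ (p : Prop) [Decidable p], (if p then (if p then (1 : ℤˣ) else -1) else 1) = 1 := by
    intro p _; split_ifs <;> rfl
  simp only [hone, Finset.prod_const_one, one_mul, mul_one]
  rw [← Finset.prod_mul_distrib]
  refine Finset.prod_congr rfl fun i _ => ?_
  rw [← shuffle_count M hM hM' i, pow_add, mul_comm]
  congr 1
  rw [← Finset.prod_const, Finset.prod_filter]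
  refine Finset.prod_congr rfl fun j _ => ?_
  have hne : M.orderEmbOfFin hM i ≠ Mᶜ.orderEmbOfFin hM' j := by
    intro h
    have h1 := Finset.orderEmbOfFin_mem M hM i
    have h2 := Finset.orderEmbOfFin_mem Mᶜ hM' j
    rw [← h] at h2
    exact (Finset.mem_compl.1 h2) h1
  rcases lt_or_gt_of_ne hne with h | h
  · simp [h, h.le]
  · simp [h, h.le]

theorem jacobi_aux (K : Type*) [Field K] (k l : ℕ) (hk : 1 ≤ k)
    (A : Matrix (Fin (k + l)) (Fin (k + l)) K) (hA : IsUnit A)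
    (M N : Finset (Fin (k + l))) (hM : M.card = k) (hN : N.card = k)
    (hM' : Mᶜ.card = l) (hN' : Nᶜ.card = l) :
    ((A.adjugate).submatrix (M.orderEmbOfFin hM) (N.orderEmbOfFin hN)).det
      = (-1 : K) ^ ((∑ i ∈ M, ((i : ℕ) + 1)) + ∑ j ∈ N, ((j : ℕ) + 1))
        * A.det ^ (k - 1)
        * (A.submatrix (Nᶜ.orderEmbOfFin hN') (Mᶜ.orderEmbOfFin hM')).det := by
  have hd : A.det ≠ 0 := ((Matrix.isUnit_iff_isUnit_det A).1 hA).ne_zero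
  set eM := finSumEquivOfFinset hM hM' with heM
  set eN := finSumEquivOfFinset hN hN' with heN
  set B := A.adjugate.submatrix eM eN with hB
  set C := A.submatrix eN eM with hC
  have hBC : B * C = A.det • (1 : Matrix (Fin k ⊕ Fin l) (Fin k ⊕ Fin l) K) := by
    rw [hB, hC, Matrix.submatrix_mul_equiv, Matrix.adjugate_mul]
    ext i j
    simp [Matrix.one_apply]
  have hB11 : (A.adjugate).submatrix (M.orderEmbOfFin hM) (N.orderEmbOfFin hN)
      = B.toBlocks₁₁ := by
    ext i j; simp [hB, heM, heN, Matrix.toBlocks₁₁]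
  have hC22 : A.submatrix (Nᶜ.orderEmbOfFin hN') (Mᶜ.orderEmbOfFin hM')
      = C.toBlocks₂₂ := by
    ext i j; simp [hC, heM, heN, Matrix.toBlocks₂₂]
  rw [hB11, hC22]
  have hprod : Matrix.fromBlocks B.toBlocks₁₁ B.toBlocks₁₂ 0 1 * C
      = Matrix.fromBlocks (A.det • 1) 0 C.toBlocks₂₁ C.toBlocks₂₂ := by
    rw [← Matrix.fromBlocks_toBlocks B, ← Matrix.fromBlocks_toBlocks C,
      Matrix.fromBlocks_multiply, ← Matrix.fromBlocks_one, Matrix.fromBlocks_smul,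
      Matrix.fromBlocks_inj] at hBC
    conv_lhs => rw [← Matrix.fromBlocks_toBlocks C]
    rw [Matrix.fromBlocks_multiply, hBC.1, hBC.2.1]
    simp
  have hdet := congrArg Matrix.det hprod
  rw [Matrix.det_mul, Matrix.det_fromBlocks_zero₂₁, Matrix.det_fromBlocks_zero₁₂,
    Matrix.det_one, mul_one, Matrix.det_smul, Matrix.det_one, mul_one, Fintype.card_fin] at hdet
  -- the determinant of `C`
  set pM : Equiv.Perm (Fin (k + l)) := finSumFinEquiv.symm.trans eM with hpM
  set pN : Equiv.Perm (Fin (k + l)) := finSumFinEquiv.symm.trans eN with hpN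
  have hCdet : C.det = ((Equiv.Perm.sign pN : ℤˣ) : ℤ) * (((Equiv.Perm.sign pM : ℤˣ) : ℤ) * A.det) := by
    rw [← Matrix.det_permute', ← Matrix.det_permute,
      ← Matrix.det_submatrix_equiv_self finSumFinEquiv]
    congr 1
    ext i j
    simp [hC, hpM, hpN]
  have hs : Equiv.Perm.sign pN * Equiv.Perm.sign pM
      = (-1) ^ ((∑ i ∈ M, ((i : ℕ) + 1)) + ∑ j ∈ N, ((j : ℕ) + 1)) := by
    have h1 := shuffle_sign M hM hM'
    have h2 := shuffle_sign N hN hN'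
    rw [Finset.sum_add_distrib, Finset.sum_add_distrib, Finset.sum_const, Finset.sum_const,
      hM, hN, pow_add, pow_add, pow_add, ← h1, ← h2]
    have hsq : ∀ u : ℤˣ, u * u = 1 := Int.units_mul_self
    have e1 := hsq ((-1) ^ (∑ i : Fin k, (i : ℕ)))
    have e2 := hsq ((-1) ^ (k • 1))
    rw [mul_mul_mul_comm, e2, mul_one, mul_mul_mul_comm, e1, mul_one, mul_comm]
  have hs' : (((Equiv.Perm.sign pN : ℤˣ) : ℤ) : K) * (((Equiv.Perm.sign pM : ℤˣ) : ℤ) : K)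
      = (-1) ^ ((∑ i ∈ M, ((i : ℕ) + 1)) + ∑ j ∈ N, ((j : ℕ) + 1)) := by
    have := congrArg (fun u : ℤˣ => (((u : ℤˣ) : ℤ) : K)) hs
    simpa only [Units.val_mul, Int.cast_mul, Units.val_pow_eq_pow_val, Int.cast_pow,
      Units.val_neg, Units.val_one, Int.cast_neg, Int.cast_one] using this
  rw [← mul_assoc, hs'] at hCdet
  rw [hCdet] at hdet
  set s := (∑ i ∈ M, ((i : ℕ) + 1)) + ∑ j ∈ N, ((j : ℕ) + 1)
  have hss : (-1 : K) ^ s * (-1) ^ s = 1 := by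
    rw [← mul_pow]; simp
  obtain ⟨m, rfl⟩ : ∃ m, k = m + 1 := ⟨k - 1, by omega⟩
  rw [Nat.add_sub_cancel]
  apply mul_right_cancel₀ hd
  rw [pow_succ] at hdet
  linear_combination (-1 : K) ^ s * hdet - B.toBlocks₁₁.det * A.det * hss

/-- **Jacobi's identity for minors of the adjugate.** For an invertible
`n × n` matrix `A` over a field `K` and index subsets `M`, `N` of cardinality `k ≥ 1`,
`det ((adj A)_{M,N}) = (-1)^s · (det A)^(k-1) · det (A_{Nᶜ, Mᶜ})`, where
`s = Σ_{i ∈ M} i + Σ_{j ∈ N} j` (indices taken in `{1, …, n}`, i.e. `1`-based), and all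
submatrices are taken with rows and columns in increasing index order. -/
theorem jacobi_adjugate_minor (K : Type*) [Field K] (n k : ℕ) (hk : 1 ≤ k)
    (A : Matrix (Fin n) (Fin n) K) (hA : IsUnit A)
    (M N : Finset (Fin n)) (hM : M.card = k) (hN : N.card = k) :
    ((A.adjugate).submatrix
        (fun a : Fin k => ((M.orderIsoOfFin hM a : {x // x ∈ M}) : Fin n))
        (fun b : Fin k => ((N.orderIsoOfFin hN b : {x // x ∈ N}) : Fin n))).det
      = (-1 : K) ^ ((∑ i ∈ M, ((i : ℕ) + 1)) + ∑ j ∈ N, ((j : ℕ) + 1))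
        * A.det ^ (k - 1)
        * (A.submatrix
            (fun a : Fin (n - k) => ((Nᶜ.orderIsoOfFin
              (by rw [Finset.card_compl, hN, Fintype.card_fin]) a : {x // x ∈ Nᶜ}) : Fin n))
            (fun b : Fin (n - k) => ((Mᶜ.orderIsoOfFin
              (by rw [Finset.card_compl, hM, Fintype.card_fin]) b : {x // x ∈ Mᶜ}) : Fin n))).det := by
  obtain ⟨l, rfl⟩ : ∃ l, n = k + l :=
    ⟨n - k, by
      have := Finset.card_le_univ M
      rw [Fintype.card_fin] at this
      omega⟩
  have hl : k + l - k = l := by omega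
  have hM' : Mᶜ.card = l := by rw [Finset.card_compl, hM, Fintype.card_fin, hl]
  have hN' : Nᶜ.card = l := by rw [Finset.card_compl, hN, Fintype.card_fin, hl]
  have key := jacobi_aux K k l hk A hA M N hM hN hM' hN'
  have gen : ∀ (l' : ℕ) (_ : l' = l) (h1 : Nᶜ.card = l') (h2 : Mᶜ.card = l'),
      (A.submatrix (fun a : Fin l' => ((Nᶜ.orderIsoOfFin h1 a : {x // x ∈ Nᶜ}) : Fin (k + l)))
        (fun b : Fin l' => ((Mᶜ.orderIsoOfFin h2 b : {x // x ∈ Mᶜ}) : Fin (k + l)))).det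
      = (A.submatrix (Nᶜ.orderEmbOfFin hN') (Mᶜ.orderEmbOfFin hM')).det := by
    rintro l' rfl h1 h2
    rfl
  rw [gen _ hl]
  exact key
end
end

section
/- Let 𝒢 = (V,E) be a simple directed graph, let i ∈ V, and let G be an admissible network matrix over ℝ(z). Let v be an n-dimensional vector over ℝ(z) such that v_j = 0 for all j ∉ N_i, and for every j ∈ N_i the entry v_j is strictly proper and G_{ji} − v_j ≠ 0. Let u ∈ ℝ^n be the i-th standard basis vector. Then the matrix Ḡ := G − v uᵀ is admissible. -/
open Polynomial Matrix

noncomputable section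

lemma aux_cross (f : RatFunc ℝ) (p q : ℝ[X]) (hq : q ≠ 0)
    (h : f = algebraMap ℝ[X] (RatFunc ℝ) p / algebraMap ℝ[X] (RatFunc ℝ) q) :
    f.num * q = p * f.denom := by
  subst h
  exact (RatFunc.num_mul_eq_mul_denom_iff hq).2 rfl

lemma aux_deg (f : RatFunc ℝ) (p q : ℝ[X]) (hq : q ≠ 0)
    (h : f = algebraMap ℝ[X] (RatFunc ℝ) p / algebraMap ℝ[X] (RatFunc ℝ) q) :
    f.num.degree + q.degree = p.degree + f.denom.degree := by
  rw [← degree_mul, ← degree_mul, aux_cross f p q hq h]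

lemma proper_of_div (f : RatFunc ℝ) (p q : ℝ[X]) (hq : q ≠ 0)
    (h : f = algebraMap ℝ[X] (RatFunc ℝ) p / algebraMap ℝ[X] (RatFunc ℝ) q)
    (hpq : p.degree ≤ q.degree) : Proper f := by
  have h1 := aux_deg f p q hq h
  unfold Proper
  have h2 : f.num.degree + q.degree ≤ f.denom.degree + q.degree := by
    rw [h1, add_comm]; gcongr
  exact (WithBot.add_le_add_iff_right (degree_ne_bot.2 hq)).1 h2

lemma lim_of_div (f : RatFunc ℝ) (p q : ℝ[X]) (hq : q ≠ 0)
    (h : f = algebraMap ℝ[X] (RatFunc ℝ) p / algebraMap ℝ[X] (RatFunc ℝ) q) :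
    limAtInfty f = if p.degree = q.degree then p.leadingCoeff / q.leadingCoeff else 0 := by
  have h1 := aux_deg f p q hq h
  have hd := f.denom_ne_zero
  have h2 : f.num.degree = f.denom.degree ↔ p.degree = q.degree := by
    constructor
    · intro e
      rw [e, add_comm] at h1
      exact ((WithBot.add_right_inj (degree_ne_bot.2 hd)).1 h1).symm
    · intro e
      rw [e, add_comm q.degree] at h1
      exact ((WithBot.add_right_inj (degree_ne_bot.2 hq)).1 h1)
  have h3 := congrArg leadingCoeff (aux_cross f p q hq h)
  rw [leadingCoeff_mul, leadingCoeff_mul] at h3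
  unfold limAtInfty
  simp only [h2]
  congr 1
  rw [div_eq_div_iff (by simpa using hd) (by simpa using hq)]
  exact h3

lemma aux_ne (f : RatFunc ℝ) : algebraMap ℝ[X] (RatFunc ℝ) f.denom ≠ 0 :=
  RatFunc.algebraMap_ne_zero f.denom_ne_zero

lemma sub_eq_div (f g : RatFunc ℝ) : f - g =
    algebraMap ℝ[X] (RatFunc ℝ) (f.num * g.denom - f.denom * g.num) /
      algebraMap ℝ[X] (RatFunc ℝ) (f.denom * g.denom) := by
  conv_lhs => rw [← f.num_div_denom, ← g.num_div_denom]
  rw [div_sub_div _ _ (aux_ne f) (aux_ne g)]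
  simp

lemma proper_sub (f g : RatFunc ℝ) (hf : Proper f) (hg : Proper g) : Proper (f - g) := by
  apply proper_of_div _ _ _ (mul_ne_zero f.denom_ne_zero g.denom_ne_zero) (sub_eq_div f g)
  refine (degree_sub_le _ _).trans (max_le ?_ ?_) <;> rw [degree_mul, degree_mul]
  · exact add_le_add_left hf _
  · exact add_le_add_right hg _

lemma lim_sub (f g : RatFunc ℝ) (hf : Proper f) (hg : StrictlyProper g) :
    limAtInfty (f - g) = limAtInfty f := by
  have hfd := f.denom_ne_zero
  have hgd := g.denom_ne_zero
  rw [lim_of_div _ _ _ (mul_ne_zero hfd hgd) (sub_eq_div f g)]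
  have k1 : (f.denom * g.num).degree < (f.denom * g.denom).degree := by
    rw [degree_mul, degree_mul]
    exact WithBot.add_lt_add_left (degree_ne_bot.2 hfd) hg
  unfold limAtInfty
  by_cases e : f.num.degree = f.denom.degree
  · have k2 : (f.num * g.denom).degree = (f.denom * g.denom).degree := by
      rw [degree_mul, degree_mul, e]
    rw [← k2] at k1
    rw [if_pos e, if_pos (by rw [degree_sub_eq_left_of_degree_lt k1, k2]),
      leadingCoeff_sub_of_degree_lt k1, leadingCoeff_mul, leadingCoeff_mul,
      mul_div_mul_right _ _ (by simpa using hgd)]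
  · have k2 : (f.num * g.denom).degree < (f.denom * g.denom).degree := by
      rw [degree_mul, degree_mul]
      exact WithBot.add_lt_add_right (degree_ne_bot.2 hgd) (lt_of_le_of_ne hf e)
    rw [if_neg e, if_neg]
    exact ((degree_sub_le _ _).trans_lt (max_lt k2 k1)).ne

lemma sp_zero : StrictlyProper 0 := by simp [StrictlyProper]
lemma proper_zero : Proper 0 := by simp [Proper]
lemma proper_one : Proper 1 := by simp [Proper]

/-- Let `G` be admissible, `v` a vector over `ℝ(z)` with `v j = 0` for
`j ∉ N_i` and, for every `j ∈ N_i`, `v j` strictly proper and `G j i - v j ≠ 0`. With `u`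
the `i`-th standard basis vector, the matrix `Ḡ := G - v uᵀ` is admissible. -/
theorem perturbed_matrix_admissible (n : ℕ) (E : Finset (Fin n × Fin n))
    (hsimple : ∀ w : Fin n, (w, w) ∉ E) (i : Fin n)
    (G : Matrix (Fin n) (Fin n) (RatFunc ℝ)) (hG : Admissible E G)
    (v : Fin n → RatFunc ℝ)
    (hv0 : ∀ j : Fin n, j ∉ Nout E i → v j = 0)
    (hv1 : ∀ j ∈ Nout E i, StrictlyProper (v j) ∧ G j i - v j ≠ 0) :
    Admissible E (G - Matrix.vecMulVec v (Pi.single i (1 : RatFunc ℝ))) := by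
  obtain ⟨h1, h2, h3⟩ := hG
  have hsp : ∀ j, StrictlyProper (v j) := fun j => by
    by_cases hj : j ∈ Nout E i
    · exact (hv1 j hj).1
    · rw [hv0 j hj]; exact sp_zero
  have hw : ∀ a b, StrictlyProper (vecMulVec v (Pi.single i (1 : RatFunc ℝ)) a b) := by
    intro a b
    by_cases hb : b = i
    · subst hb; simpa [vecMulVec_apply] using hsp a
    · simpa [vecMulVec_apply, hb] using sp_zero
  have hP : ∀ a b, Proper ((G - vecMulVec v (Pi.single i (1 : RatFunc ℝ))) a b) :=
    fun a b => proper_sub _ _ (h1 b a) (hw a b).le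
  refine ⟨fun a b => hP b a, ?_, ?_⟩
  · intro a b
    by_cases ha : a = i
    · subst ha
      by_cases hb : b ∈ Nout E a
      · have := (hv1 b hb).2
        have hE : (a, b) ∈ E := by simpa [Nout] using hb
        simpa [vecMulVec_apply, hE] using this
      · simpa [vecMulVec_apply, hv0 b hb] using h2 a b
    · simpa [vecMulVec_apply, ha] using h2 a b
  · have key : limMatrix (G - vecMulVec v (Pi.single i (1 : RatFunc ℝ))) = limMatrix G := by
      ext a b
      have hone : Proper ((1 : Matrix (Fin n) (Fin n) (RatFunc ℝ)) a b) := by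
        rw [Matrix.one_apply]
        split_ifs
        · exact proper_one
        · exact proper_zero
      have e : (1 - G) a b =
          (1 - (G - vecMulVec v (Pi.single i (1 : RatFunc ℝ)))) a b
            - vecMulVec v (Pi.single i (1 : RatFunc ℝ)) a b := by
        simp only [Matrix.sub_apply]; ring
      simp only [limMatrix, Matrix.of_apply]
      rw [e]
      exact (lim_sub _ _ (proper_sub _ _ hone (hP a b)) (hw a b)).symm
    rw [key]
    exact h3
end
end

section
/- Let 𝒢 = (V,E) be a simple directed graph, let i ∈ V and C ⊆ V, and let G, Ḡ be admissible network matrices over ℝ(z) with C(I − G)⁻¹ = C(I − Ḡ)⁻¹. Set D := G − Ḡ and T := (I − G)⁻¹. Then D_{ji} = 0 for all j ∉ N_i, and T_{C, N_i} · D_{N_i, i} = 0; consequently, if T_{C, N_i} has rank |N_i| over ℝ(z), then G_{•i} = Ḡ_{•i}. -/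
open Polynomial Matrix

noncomputable section

open Filter Topology in
/-- `f` tends to `c` at infinity. -/
def LimR (f : RatFunc ℝ) (c : ℝ) : Prop :=
  Tendsto (fun x : ℝ => RatFunc.eval (RingHom.id ℝ) x f) atTop (𝓝 c)

open Filter Topology in
lemma ev_denom (f : RatFunc ℝ) :
    ∀ᶠ x : ℝ in atTop, Polynomial.eval₂ (RingHom.id ℝ) x f.denom ≠ 0 := by
  filter_upwards [Polynomial.eventually_atTop_not_isRoot (P := f.denom) f.denom_ne_zero] with x hx
  simpa [Polynomial.IsRoot, Polynomial.eval₂_id] using hx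

open Filter Topology in
lemma LimR.add {f g : RatFunc ℝ} {c d : ℝ} (hf : LimR f c) (hg : LimR g d) :
    LimR (f + g) (c + d) := by
  refine (Tendsto.add hf hg).congr' ?_
  filter_upwards [ev_denom f, ev_denom g] with x h1 h2
  exact (RatFunc.eval_add (RingHom.id ℝ) x h1 h2).symm

open Filter Topology in
lemma LimR.mul {f g : RatFunc ℝ} {c d : ℝ} (hf : LimR f c) (hg : LimR g d) :
    LimR (f * g) (c * d) := by
  refine (Tendsto.mul hf hg).congr' ?_
  filter_upwards [ev_denom f, ev_denom g] with x h1 h2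
  exact (RatFunc.eval_mul (RingHom.id ℝ) x h1 h2).symm

lemma LimR.zero : LimR 0 0 := by
  simp [LimR]

lemma LimR.one : LimR 1 1 := by
  simp [LimR]

lemma LimR.int (k : ℤ) : LimR (k : RatFunc ℝ) (k : ℝ) := by
  have : (k : RatFunc ℝ) = algebraMap ℝ[X] (RatFunc ℝ) (k : ℝ[X]) := by simp
  rw [LimR, this]
  simp only [RatFunc.eval_algebraMap]
  simp

lemma LimR.unique_zero {c : ℝ} (h : LimR 0 c) : c = 0 :=
  tendsto_nhds_unique h LimR.zero

lemma LimR.sum {ι : Type*} (s : Finset ι) (f : ι → RatFunc ℝ) (c : ι → ℝ)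
    (h : ∀ a ∈ s, LimR (f a) (c a)) : LimR (∑ a ∈ s, f a) (∑ a ∈ s, c a) := by
  classical
  induction s using Finset.induction_on with
  | empty => simpa using LimR.zero
  | insert a s ha ih =>
    rw [Finset.sum_insert ha, Finset.sum_insert ha]
    exact (h a (by simp)).add (ih fun b hb => h b (by simp [hb]))

lemma LimR.prod {ι : Type*} (s : Finset ι) (f : ι → RatFunc ℝ) (c : ι → ℝ)
    (h : ∀ a ∈ s, LimR (f a) (c a)) : LimR (∏ a ∈ s, f a) (∏ a ∈ s, c a) := by
  classical
  induction s using Finset.induction_on with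
  | empty => simpa using LimR.one
  | insert a s ha ih =>
    rw [Finset.prod_insert ha, Finset.prod_insert ha]
    exact (h a (by simp)).mul (ih fun b hb => h b (by simp [hb]))

lemma LimR.det {n : ℕ} (A : Matrix (Fin n) (Fin n) (RatFunc ℝ)) (B : Matrix (Fin n) (Fin n) ℝ)
    (h : ∀ a b, LimR (A a b) (B a b)) : LimR A.det B.det := by
  rw [Matrix.det_apply', Matrix.det_apply']
  exact LimR.sum _ _ _ fun s _ => (LimR.int _).mul (LimR.prod _ _ _ fun a _ => h _ _)

lemma limR_of_proper {f : RatFunc ℝ} (hf : Proper f) : LimR f (limAtInfty f) := by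
  unfold LimR limAtInfty RatFunc.eval
  simp only [Polynomial.eval₂_id]
  split_ifs with h
  · exact Polynomial.div_tendsto_atTop_leadingCoeff_div_of_degree_eq _ _ h
  · exact Polynomial.div_tendsto_atTop_zero_of_degree_lt _ _ (lt_of_le_of_ne hf h)

lemma proper_neg {f : RatFunc ℝ} (hf : Proper f) : Proper (-f) := by
  unfold Proper at *
  have h := congrArg Polynomial.degree (RatFunc.num_denom_neg f)
  rw [Polynomial.degree_mul, Polynomial.degree_mul, Polynomial.degree_neg] at h
  have h2 : (-f).num.degree + f.denom.degree ≤ (-f).denom.degree + f.denom.degree := by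
    rw [h, add_comm (-f).denom.degree]
    gcongr
  exact (WithBot.add_le_add_iff_right
    (by simpa [Polynomial.degree_eq_bot] using f.denom_ne_zero)).1 h2

lemma det_ne_zero {n : ℕ} {E : Finset (Fin n × Fin n)}
    (hsimple : ∀ v : Fin n, (v, v) ∉ E) {G : Matrix (Fin n) (Fin n) (RatFunc ℝ)}
    (hG : Admissible E G) : (1 - G).det ≠ 0 := by
  obtain ⟨h1, h2, h3⟩ := hG
  have hp : ∀ a b, Proper ((1 - G) a b) := by
    intro a b
    by_cases hab : a = b
    · subst hab
      have : G a a = 0 := by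
        by_contra h
        exact hsimple a ((h2 a a).1 h)
      simp [this, Proper]
    · have : (1 - G) a b = -(G a b) := by simp [Matrix.one_apply_ne hab]
      rw [this]
      exact proper_neg (h1 b a)
  have hl : LimR (1 - G).det (limMatrix G).det :=
    LimR.det _ _ fun a b => limR_of_proper (hp a b)
  intro h0
  rw [h0] at hl
  have hz := hl.unique_zero
  refine h3 Finset.univ ?_
  rw [← hz]
  exact Matrix.det_submatrix_equiv_self
    (Equiv.subtypeUnivEquiv (p := fun v : Fin n => v ∈ (Finset.univ : Finset (Fin n)))
      (fun v => Finset.mem_univ v)) (limMatrix G)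

/-- Let `G`, `Ḡ` be admissible with `C (I - G)⁻¹ = C (I - Ḡ)⁻¹`, and set
`D := G - Ḡ`, `T := (I - G)⁻¹`. Then `D j i = 0` for all `j ∉ N_i`, and
`T_{C, N_i} · D_{N_i, i} = 0`; consequently, if `T_{C, N_i}` has rank `|N_i|` over `ℝ(z)`,
then `G_{•i} = Ḡ_{•i}`. -/
theorem column_recovery_from_rank (n : ℕ) (E : Finset (Fin n × Fin n))
    (hsimple : ∀ v : Fin n, (v, v) ∉ E) (i : Fin n) (C : Finset (Fin n))
    (G Gbar : Matrix (Fin n) (Fin n) (RatFunc ℝ))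
    (hG : Admissible E G) (hGbar : Admissible E Gbar)
    (hCT : rowsAgree C (1 - G)⁻¹ (1 - Gbar)⁻¹) :
    (∀ j : Fin n, j ∉ Nout E i → (G - Gbar) j i = 0) ∧
    ((((1 - G)⁻¹).submatrix (fun c : {v // v ∈ C} => (c : Fin n))
        (fun j : {v // v ∈ Nout E i} => (j : Fin n))).mulVec
      (fun j : {v // v ∈ Nout E i} => (G - Gbar) (j : Fin n) i) = 0) ∧
    ((((1 - G)⁻¹).submatrix (fun c : {v // v ∈ C} => (c : Fin n))
        (fun j : {v // v ∈ Nout E i} => (j : Fin n))).rank = (Nout E i).card →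
      ∀ j : Fin n, G j i = Gbar j i) := by
  classical
  have hD : ∀ j : Fin n, j ∉ Nout E i → (G - Gbar) j i = 0 := by
    intro j hj
    have hj' : (i, j) ∉ E := by simpa [Nout] using hj
    have e1 : G j i = 0 := by
      by_contra h
      exact hj' ((hG.2.1 i j).1 h)
    have e2 : Gbar j i = 0 := by
      by_contra h
      exact hj' ((hGbar.2.1 i j).1 h)
    simp [e1, e2]
  have hM : (((1 - G)⁻¹).submatrix (fun c : {v // v ∈ C} => (c : Fin n))
        (fun j : {v // v ∈ Nout E i} => (j : Fin n))).mulVec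
      (fun j : {v // v ∈ Nout E i} => (G - Gbar) (j : Fin n) i) = 0 := by
    have u1 : (1 - G)⁻¹ * (1 - G) = 1 :=
      Matrix.nonsing_inv_mul _ (det_ne_zero hsimple hG).isUnit
    have u2 : (1 - Gbar)⁻¹ * (1 - Gbar) = 1 :=
      Matrix.nonsing_inv_mul _ (det_ne_zero hsimple hGbar).isUnit
    funext c
    have hrow : ∀ k, (1 - G)⁻¹ c k = (1 - Gbar)⁻¹ c k := fun k =>
      congrFun (congrFun hCT c) k
    have hzero : ((1 - G)⁻¹ * (G - Gbar)) c i = 0 := by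
      have e : G - Gbar = (1 - Gbar) - (1 - G) := by abel
      rw [e, Matrix.mul_sub, u1, Matrix.sub_apply, sub_eq_zero]
      refine Eq.trans ?_ (congrFun (congrFun u2 c) i)
      rw [Matrix.mul_apply, Matrix.mul_apply]
      exact Finset.sum_congr rfl fun k _ => by rw [hrow k]
    rw [Matrix.mul_apply] at hzero
    rw [← Finset.sum_subset (Finset.subset_univ (Nout E i))
      (fun j _ hj => by rw [hD j hj, mul_zero]), ← Finset.sum_coe_sort] at hzero
    exact hzero
  refine ⟨hD, hM, fun hr j => ?_⟩
  by_cases hj : j ∈ Nout E i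
  · have hli := linearIndependent_iff_card_eq_finrank_span.2
      (show Fintype.card {v // v ∈ Nout E i} = _ by
        rw [Fintype.card_coe, ← hr, Matrix.rank_eq_finrank_span_cols]; rfl)
    have hinj := Matrix.mulVec_injective_iff.2 hli
    have h0 := hinj (hM.trans (Matrix.mulVec_zero _).symm)
    have := congrFun h0 ⟨j, hj⟩
    exact sub_eq_zero.1 this
  · exact sub_eq_zero.1 (hD j hj)
end
end
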